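/- Let m > 1, n ≥ 2 an integer, μ ∈ (-1,1), and R, Q, D > 0. Let ψ be the solution of ψ'' = wψ on (0,∞) with ψ(0)=0, ψ'(0)=1, where for μ ∈ (−1,0): w(r) = D on [0,R], w(r) = Q(2R)^{2μ}(r−R)/R + D(2R−r)/R on (R,2R], w(r) = Q r^{2μ} for r > 2R; and for μ ∈ [0,1): w(r) = max{D, Q r^{2μ}}. Then there exists R̄ > 0 depending only on n, m, μ, R, Q, D such that for every R₀ ≥ R̄ the following holds. Let F > 0 satisfy (n−1)ψ'(r)·r/ψ(r) ≤ F for all r ∈ (0, R₀), and suppose also (n−1)ψ'(r)/(ψ(r) r^μ) − μ/r^{1+μ} ≤ (n−1)√(2Q) for all r ≥ R₀. Suppose C > 0 satisfies C^{m−1} ≤ (1/(m(1−μ))) · min{ 1/(2(n−1)√(2Q)), R₀^{1+μ}/(4(F+1)), (m−1)R₀^{1+μ}/(2+(m−1)(F+1)) }, that 0 < γ ≤ [m(1+μ)(1−μ)C^{m−1}/(m−1)]^{(1−μ)/(1+μ)}, and that (γ^{(1+μ)/(1−μ)}/R₀^{1+μ}) log t₀ ≥ [ (4(m−1)R₀^{1+μ}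 − 4m(1−μ)[(m−1)(F+1)+1−μ]C^{m−1}) / ((3+μ)(m−1)R₀^{1+μ} − 4m(m−1)(1−μ)(F+1)C^{m−1}) ]^{(1+μ)/(1−μ)}. Define U̲(r,t) for t ≥ 0 by (t+t₀)^{1/(m−1)} U̲(r,t) = C(γ[log(t+t₀)]^{(1−μ)/(1+μ)} − r^{1−μ})₊^{1/(m−1)} for r ≥ R₀, and (t+t₀)^{1/(m−1)} U̲(r,t) = C(γ[log(t+t₀)]^{(1−μ)/(1+μ)} − ((1−μ)/(2R₀^{1+μ}))r² − ((1+μ)/2)R₀^{1−μ})₊^{1/(m−1)} for 0 ≤ r < R₀. Then at every point (r,t) ∈ ((0,∞)∖{R₀}) × (0,∞) at which U̲(r,t) > 0, the pointwise subsolution inequality ∂_t U̲ ≤ ∂²_{rr}(U̲^m) + (n−1)(ψ'(r)/ψ(r)) ∂_r(U̲^m) holds. -/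

import Mathlib

/-- The lower barrier `U̲(r,t)` of Lemma 4.6 of the paper (same formula as the upper
barrier of Lemma 4.4). -/
noncomputable def Ulow (m μ R₀ t₀ C γ : ℝ) (r t : ℝ) : ℝ :=
  (if R₀ ≤ r then
      C * (max (γ * (Real.log (t + t₀)) ^ ((1 - μ) / (1 + μ)) - r ^ (1 - μ)) 0)
        ^ (1 / (m - 1))
    else
      C * (max (γ * (Real.log (t + t₀)) ^ ((1 - μ) / (1 + μ))
            - (1 - μ) / (2 * R₀ ^ (1 + μ)) * r ^ 2
            - (1 + μ) / 2 * R₀ ^ (1 - μ)) 0) ^ (1 / (m - 1)))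
    / (t + t₀) ^ (1 / (m - 1))

/-!
Writing `u = C v₊^{1/(m-1)}` turns the porous medium equation with drift `b` into the pressure
equation `v_t = C^{m-1} m (v (v_rr + b v_r) + v_r² / (m-1))`. The barrier has pressure
`(γ (log τ)^p - η(r)) / τ` with `τ = t + t₀` and `p = (1-μ)/(1+μ)`, so after multiplication by
`τ²` only a scalar inequality is left. With `γ = Γ^p` and `P = Γ log τ`, the time derivative
contributes `p Γ P^{p-1}` and positivity of the barrier reads `η(r) < P^p`.

For `r > R₀` we have `η = S^p` and `η'² = (1-μ)² S^{p-1}` with `S = r^{1+μ}`; the inequality follows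
from the monotonicity of `x^p (1 - k/x)` on `x ≥ k`. For `r < R₀` the inequality is affine in
`r²/R₀²`, its worst case is `r = R₀`, and there it says that `P^p / R₀^{1-μ}` is at least the ratio
in the lower bound on `log t₀`.
-/

open Filter Set Topology

/-- The pointwise differential inequality `u_t ≤ (u^m)_{rr} + b(r) (u^m)_r` at `(r, t)`. The
derivatives are those of Mathlib's `deriv`, hence zero where they do not exist. -/
def IsPorousMediumSubsolutionAt (m : ℝ) (b : ℝ → ℝ) (u : ℝ → ℝ → ℝ) (r t : ℝ) : Prop :=
  deriv (fun s => u r s) t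
    ≤ deriv (deriv fun x => u x t ^ m) r + b r * deriv (fun x => u x t ^ m) r

theorem deriv_deriv_const_mul_rpow {f f' : ℝ → ℝ} {f'' K q r : ℝ}
    (hf : ∀ᶠ x in 𝓝 r, HasDerivAt f (f' x) x) (hf' : HasDerivAt f' f'' r) (hpos : 0 < f r) :
    deriv (deriv fun x => K * f x ^ q) r
      = K * (q * f r ^ (q - 2) * ((q - 1) * f' r ^ 2 + f r * f'')) := by
  have hf_pos : ∀ᶠ x in 𝓝 r, 0 < f x :=
    hf.self_of_nhds.continuousAt.eventually (lt_mem_nhds hpos)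
  have first_deriv : deriv (fun x => K * f x ^ q) =ᶠ[𝓝 r]
      fun x => K * (f' x * q * f x ^ (q - 1)) := by
    filter_upwards [hf, hf_pos] with x hx hx_pos
    exact ((hx.rpow_const (Or.inl hx_pos.ne')).const_mul K).deriv
  have second_deriv := ((hf'.mul_const q).fun_mul
    (hf.self_of_nhds.rpow_const (p := q - 1) (Or.inl hpos.ne'))).const_mul K
  have hpow : f r ^ (q - 1) = f r ^ (q - 2) * f r := by
    rw [← Real.rpow_add_one hpos.ne']; ring_nf
  rw [first_deriv.deriv_eq, second_deriv.deriv, hpow, sub_sub, one_add_one_eq_two]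
  ring

theorem IsPorousMediumSubsolutionAt.of_pressure {m C : ℝ} (hm : 1 < m) (hC : 0 < C)
    {b : ℝ → ℝ} {u v : ℝ → ℝ → ℝ} {r t vt vrr : ℝ} {vr : ℝ → ℝ}
    (hut : u r =ᶠ[𝓝 t] fun s => C * max (v r s) 0 ^ (1 / (m - 1)))
    (hur : (fun x => u x t) =ᶠ[𝓝 r] fun x => C * max (v x t) 0 ^ (1 / (m - 1)))
    (hv : 0 < v r t) (hvt : HasDerivAt (v r) vt t)
    (hvr : ∀ᶠ x in 𝓝 r, HasDerivAt (fun y => v y t) (vr x) x) (hvrr : HasDerivAt vr vrr r)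
    (h : vt ≤ C ^ (m - 1) * m * (v r t * (vrr + b r * vr r) + vr r ^ 2 / (m - 1))) :
    IsPorousMediumSubsolutionAt m b u r t := by
  have hm₁ : 0 < m - 1 := sub_pos.2 hm
  set a := 1 / (m - 1) with ha
  have ham : a * m = a + 1 := by rw [ha]; field_simp; ring
  have hu_time : u r =ᶠ[𝓝 t] fun s => C * v r s ^ a := by
    filter_upwards [hut, hvt.continuousAt.eventually (lt_mem_nhds hv)] with s hs hs_pos
    rw [hs, max_eq_left hs_pos.le]
  have hu_space : (fun x => u x t ^ m) =ᶠ[𝓝 r] fun x => C ^ m * v x t ^ (a + 1) := by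
    filter_upwards [hur, hvr.self_of_nhds.continuousAt.eventually (lt_mem_nhds hv)]
      with x hx hx_pos
    rw [hx, max_eq_left hx_pos.le, Real.mul_rpow hC.le (by positivity),
      ← Real.rpow_mul hx_pos.le, ham]
  have time_deriv : deriv (fun s => u r s) t = C * (vt * a * v r t ^ (a - 1)) :=
    hu_time.deriv_eq.trans ((hvt.rpow_const (Or.inl hv.ne')).const_mul C).deriv
  have space_deriv : deriv (fun x => u x t ^ m) r = C ^ m * (vr r * (a + 1) * v r t ^ a) := by
    rw [hu_space.deriv_eq,
      ((hvr.self_of_nhds.rpow_const (Or.inl hv.ne')).const_mul (C ^ m)).deriv,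
      add_sub_cancel_right]
  have hC_pow : C ^ m = C ^ (m - 1) * C := by rw [← Real.rpow_add_one hC.ne', sub_add_cancel]
  have hv_pow : v r t ^ a = v r t ^ (a - 1) * v r t := by
    rw [← Real.rpow_add_one hv.ne', sub_add_cancel]
  rw [IsPorousMediumSubsolutionAt, time_deriv, space_deriv, hu_space.deriv.deriv_eq,
    deriv_deriv_const_mul_rpow hvr hvrr hv, hC_pow, hv_pow, ← ham,
    show a * m - 2 = a - 1 by rw [ham]; ring, show a * m - 1 = a by rw [ham]; ring]
  calc C * (vt * a * v r t ^ (a - 1)) = C * a * v r t ^ (a - 1) * vt := by ring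
    _ ≤ C * a * v r t ^ (a - 1)
          * (C ^ (m - 1) * m * (v r t * (vrr + b r * vr r) + vr r ^ 2 / (m - 1))) := by
        gcongr
    _ = _ := by rw [div_eq_mul_one_div (vr r ^ 2), ← ha]; ring

/-- The barrier `C ((θ(t) - η(r))₊ / (t + t₀))^{1/(m-1)}` with separated pressure profile; the power
of the quotient is written as a quotient of powers, as in `Ulow`. -/
noncomputable def separatedBarrier (m t₀ C : ℝ) (θ η : ℝ → ℝ) (r t : ℝ) : ℝ :=
  C * max (θ t - η r) 0 ^ (1 / (m - 1)) / (t + t₀) ^ (1 / (m - 1))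

theorem separatedBarrier_eq_pressure {m t₀ C t : ℝ} (θ η : ℝ → ℝ) (r : ℝ) (hτ : 0 < t + t₀) :
    separatedBarrier m t₀ C θ η r t
      = C * max ((θ t - η r) / (t + t₀)) 0 ^ (1 / (m - 1)) := by
  rw [separatedBarrier, mul_div_assoc, ← Real.div_rpow (le_max_right _ _) hτ.le,
    ← max_div_div_right hτ.le, zero_div]

theorem lt_of_separatedBarrier_pos {m t₀ C : ℝ} {θ η : ℝ → ℝ} {r t : ℝ} (hm : 1 < m)
    (h : 0 < separatedBarrier m t₀ C θ η r t) : η r < θ t := by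
  by_contra! hle
  have hexp : 1 / (m - 1) ≠ 0 := one_div_ne_zero (sub_pos.2 hm).ne'
  rw [separatedBarrier, max_eq_right (sub_nonpos.2 hle), Real.zero_rpow hexp, mul_zero,
    zero_div] at h
  exact h.false

theorem lt_rpow_of_separatedBarrier_log_pos {m t₀ C Γ p : ℝ} {η : ℝ → ℝ} {r t : ℝ} (hm : 1 < m)
    (hΓ : 0 ≤ Γ) (hτ : 1 ≤ t + t₀)
    (h : 0 < separatedBarrier m t₀ C (fun s => Γ ^ p * Real.log (s + t₀) ^ p) η r t) :
    η r < (Γ * Real.log (t + t₀)) ^ p := by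
  rw [Real.mul_rpow hΓ (Real.log_nonneg hτ)]
  exact lt_of_separatedBarrier_pos (θ := fun s => Γ ^ p * Real.log (s + t₀) ^ p) hm h

theorem IsPorousMediumSubsolutionAt.of_separatedBarrier {m t₀ C : ℝ} (hm : 1 < m) (hC : 0 < C)
    {b θ η η' : ℝ → ℝ} {u : ℝ → ℝ → ℝ} {r t θ' η'' : ℝ} (hτ : 0 < t + t₀)
    (hu : ∀ᶠ x in 𝓝 r, u x = separatedBarrier m t₀ C θ η x) (hpos : η r < θ t)
    (hθ : HasDerivAt θ θ' t) (hη : ∀ᶠ x in 𝓝 r, HasDerivAt η (η' x) x)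
    (hη' : HasDerivAt η' η'' r)
    (h : (t + t₀) * θ' - (θ t - η r)
      ≤ C ^ (m - 1) * m * (η' r ^ 2 / (m - 1) - (θ t - η r) * (η'' + b r * η' r))) :
    IsPorousMediumSubsolutionAt m b u r t := by
  have hτ_near : ∀ᶠ s in 𝓝 t, 0 < s + t₀ :=
    (continuous_add_const t₀).continuousAt.eventually (lt_mem_nhds hτ)
  refine .of_pressure hm hC (v := fun x s => (θ s - η x) / (s + t₀))
    (vr := fun x => -η' x / (t + t₀)) ?_ ?_ (div_pos (sub_pos.2 hpos) hτ)
    ((hθ.sub_const (η r)).fun_div ((hasDerivAt_id' t).add_const t₀) hτ.ne')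
    (hη.mono fun x hx => (hx.const_sub (θ t)).div_const _) (hη'.fun_neg.div_const _) ?_
  · filter_upwards [hτ_near] with s hs
    rw [hu.self_of_nhds, separatedBarrier_eq_pressure θ η r hs]
  · filter_upwards [hu] with x hx
    rw [hx, separatedBarrier_eq_pressure θ η x hτ]
  · calc (θ' * (t + t₀) - (θ t - η r) * 1) / (t + t₀) ^ 2
        = ((t + t₀) * θ' - (θ t - η r)) / (t + t₀) ^ 2 := by ring
      _ ≤ C ^ (m - 1) * m * (η' r ^ 2 / (m - 1) - (θ t - η r) * (η'' + b r * η' r))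
            / (t + t₀) ^ 2 := by gcongr
      _ = _ := by field_simp; ring

theorem IsPorousMediumSubsolutionAt.of_log_separatedBarrier {m t₀ C Γ p : ℝ} (hm : 1 < m)
    (hC : 0 < C) (hΓ : 0 < Γ) {b η η' : ℝ → ℝ} {u : ℝ → ℝ → ℝ} {r t η'' : ℝ}
    (hτ : 1 < t + t₀)
    (hu : ∀ᶠ x in 𝓝 r,
      u x = separatedBarrier m t₀ C (fun s => Γ ^ p * Real.log (s + t₀) ^ p) η x)
    (hpos : η r < (Γ * Real.log (t + t₀)) ^ p)
    (hη : ∀ᶠ x in 𝓝 r, HasDerivAt η (η' x) x) (hη' : HasDerivAt η' η'' r)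
    (h : p * Γ * (Γ * Real.log (t + t₀)) ^ (p - 1) - ((Γ * Real.log (t + t₀)) ^ p - η r)
      ≤ C ^ (m - 1) * m * (η' r ^ 2 / (m - 1)
          - ((Γ * Real.log (t + t₀)) ^ p - η r) * (η'' + b r * η' r))) :
    IsPorousMediumSubsolutionAt m b u r t := by
  have hτ₀ : 0 < t + t₀ := one_pos.trans hτ
  have hL : 0 < Real.log (t + t₀) := Real.log_pos hτ
  have hP : (Γ * Real.log (t + t₀)) ^ p = Γ ^ p * Real.log (t + t₀) ^ p :=
    Real.mul_rpow hΓ.le hL.le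
  rw [hP] at hpos h
  have hθ := ((((hasDerivAt_id' t).add_const t₀).log hτ₀.ne').rpow_const (p := p)
    (Or.inl hL.ne')).const_mul (Γ ^ p)
  refine .of_separatedBarrier hm hC hτ₀ hu hpos hθ hη hη' (le_of_eq_of_le ?_ h)
  rw [Real.mul_rpow hΓ.le hL.le, Real.rpow_sub_one hΓ.ne']
  field_simp

theorem mul_rpow_sub_one_sub_le {k p x y : ℝ} (hp : 0 ≤ p) (hk : 0 ≤ k) (hx : 0 < x)
    (hkx : k ≤ x) (hxy : x ≤ y) :
    k * (y ^ (p - 1) - x ^ (p - 1)) ≤ y ^ p - x ^ p := by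
  have hy : 0 < y := hx.trans_le hxy
  have hmono : x ^ p * (1 - k / x) ≤ y ^ p * (1 - k / y) := by
    have : k / x ≤ 1 := (div_le_one hx).2 hkx
    gcongr
  rw [Real.rpow_sub_one hx.ne', Real.rpow_sub_one hy.ne']
  linear_combination hmono

theorem outer_pressure_inequality {p ε κ d S P : ℝ} (hp : 0 ≤ p) (hε : 0 ≤ ε) (hS : 0 < S)
    (hSP : S ≤ P) (hεS : ε ≤ S / 2) (hεκ : ε ≤ κ) (hd : d ≤ 1 / 2) :
    ε * P ^ (p - 1) - (P ^ p - S ^ p) ≤ κ * S ^ (p - 1) - d * (P ^ p - S ^ p) := by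
  have growth : 2 * ε * (P ^ (p - 1) - S ^ (p - 1)) ≤ P ^ p - S ^ p :=
    mul_rpow_sub_one_sub_le hp (by linarith) hS (by linarith) hSP
  have hκ : ε * S ^ (p - 1) ≤ κ * S ^ (p - 1) := by gcongr
  have hdG : d * (P ^ p - S ^ p) ≤ 1 / 2 * (P ^ p - S ^ p) :=
    mul_le_mul_of_nonneg_right hd (sub_nonneg.2 (Real.rpow_le_rpow hS.le hSP hp))
  linarith

/-- The least admissible value of `P ^ p / R₀ ^ (1 - μ)` at `r = R₀`, where `θ` bounds the drift
term and `κ` is the coefficient of the gradient term. -/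
noncomputable def criticalRatio (μ θ κ : ℝ) : ℝ :=
  (1 - θ - κ) / ((3 + μ) / 4 - θ)

theorem one_le_criticalRatio {μ θ κ : ℝ} (hμ : -1 < μ) (hθ : θ ≤ 1 / 4)
    (hκ : κ ≤ (1 - μ) / 4) : 1 ≤ criticalRatio μ θ κ := by
  rw [criticalRatio, le_div_iff₀ (by linarith)]
  linarith

theorem inner_pressure_inequality {μ p ε κ θ d s A P : ℝ} (hμ : μ ∈ Ioo (-1) 1) (hp : 0 < p)
    (hA : 0 < A) (hθ : θ ≤ 1 / 4) (hκ : κ ≤ (1 - μ) / 4) (hεκ : ε ≤ κ * A) (hd : d ≤ θ)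
    (hs : s ≤ 1) (hP : A * criticalRatio μ θ κ ^ p⁻¹ ≤ P)
    (hG : 0 ≤ P ^ p - A ^ p * ((1 - μ) / 2 * s + (1 + μ) / 2)) :
    ε * P ^ (p - 1) - (P ^ p - A ^ p * ((1 - μ) / 2 * s + (1 + μ) / 2))
      ≤ κ * A ^ p * s - d * (P ^ p - A ^ p * ((1 - μ) / 2 * s + (1 + μ) / 2)) := by
  obtain ⟨hμ₁, hμ₂⟩ := hμ
  have hμ' : 0 < 1 - μ := by linarith
  have hden : 0 < (3 + μ) / 4 - θ := by linarith
  have hρ := one_le_criticalRatio hμ₁ hθ hκ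
  set ρ := criticalRatio μ θ κ with hρ_def
  have hAP : A ≤ P :=
    (le_mul_of_one_le_right hA.le (Real.one_le_rpow hρ (inv_nonneg.2 hp.le))).trans hP
  have hP_pos : 0 < P := hA.trans_le hAP
  have time_term : ε * P ^ (p - 1) ≤ (1 - μ) / 4 * P ^ p := by
    have hεP : ε ≤ (1 - μ) / 4 * P := hεκ.trans (by gcongr)
    calc ε * P ^ (p - 1) ≤ (1 - μ) / 4 * P * P ^ (p - 1) := by gcongr
      _ = (1 - μ) / 4 * P ^ p := by rw [Real.rpow_sub_one hP_pos.ne']; field_simp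
  have boundary : (1 - μ) / 4 * P ^ p ≤ (1 - θ) * (P ^ p - A ^ p) + κ * A ^ p := by
    have hρP : A ^ p * ρ ≤ P ^ p := by
      have := Real.rpow_le_rpow (by positivity) hP hp.le
      rwa [Real.mul_rpow hA.le (by positivity), Real.rpow_inv_rpow (by positivity) hp.ne'] at this
    rw [hρ_def, criticalRatio, ← mul_div_assoc, div_le_iff₀ hden] at hρP
    linarith
  have worst_case : 0 ≤ (1 - s) * A ^ p * ((1 - μ) * (1 - θ) / 2 - κ) := by
    have : 0 ≤ (1 - μ) * (1 / 4 - θ) := mul_nonneg hμ'.le (by linarith)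
    exact mul_nonneg (mul_nonneg (by linarith) (by positivity)) (by linarith)
  have drift := mul_le_mul_of_nonneg_right hd hG
  linarith

/-- The quadratic that replaces `r ^ (1 - μ)` for `r < R₀` in `Ulow`; it has the same value and the
same first derivative at `R₀`. -/
noncomputable def innerProfile (μ R₀ r : ℝ) : ℝ :=
  (1 - μ) / (2 * R₀ ^ (1 + μ)) * r ^ 2 + (1 + μ) / 2 * R₀ ^ (1 - μ)

theorem hasDerivAt_innerProfile (μ R₀ r : ℝ) :
    HasDerivAt (innerProfile μ R₀) ((1 - μ) / R₀ ^ (1 + μ) * r) r := by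
  refine (((hasDerivAt_pow 2 r).const_mul _).add_const _).congr_deriv ?_
  simp only [Nat.cast_ofNat, Nat.add_one_sub_one, pow_one]
  ring

theorem hasDerivAt_rpow_one_sub (μ : ℝ) {r : ℝ} (hr : r ≠ 0) :
    HasDerivAt (fun x => x ^ (1 - μ)) ((1 - μ) * r ^ (-μ)) r :=
  (Real.hasDerivAt_rpow_const (Or.inl hr)).congr_deriv (by ring_nf)

theorem rpow_one_add_rpow_div {μ x : ℝ} (hμ : -1 < μ) (hx : 0 ≤ x) :
    (x ^ (1 + μ)) ^ ((1 - μ) / (1 + μ)) = x ^ (1 - μ) := by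
  rw [← Real.rpow_mul hx, mul_div_cancel₀ _ (by linarith)]

theorem rpow_one_add_rpow_div_sub_one {μ x : ℝ} (hμ : -1 < μ) (hx : 0 ≤ x) :
    (x ^ (1 + μ)) ^ ((1 - μ) / (1 + μ) - 1) = (x ^ (-μ)) ^ 2 := by
  have hμ' : 1 + μ ≠ 0 := by linarith
  rw [← Real.rpow_mul hx, ← Real.rpow_mul_natCast hx]
  congr 1
  field_simp
  push_cast
  ring

theorem rpow_one_sub_mul_rpow_one_add {μ x : ℝ} (hx : 0 < x) :
    x ^ (1 - μ) * x ^ (1 + μ) = x ^ 2 := by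
  rw [← Real.rpow_add hx, ← Real.rpow_natCast]
  norm_num

theorem innerProfile_eq {μ R₀ : ℝ} (hμ : -1 < μ) (hR₀ : 0 < R₀) (r : ℝ) :
    innerProfile μ R₀ r = (R₀ ^ (1 + μ)) ^ ((1 - μ) / (1 + μ))
      * ((1 - μ) / 2 * (r / R₀) ^ 2 + (1 + μ) / 2) := by
  rw [innerProfile, rpow_one_add_rpow_div hμ hR₀.le, div_pow, ← rpow_one_sub_mul_rpow_one_add hR₀]
  field_simp

theorem Ulow_eq_of_lt {m μ R₀ t₀ C γ r : ℝ} (h : r < R₀) :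
    Ulow m μ R₀ t₀ C γ r = separatedBarrier m t₀ C
      (fun s => γ * Real.log (s + t₀) ^ ((1 - μ) / (1 + μ))) (innerProfile μ R₀) r := by
  funext s
  rw [Ulow, if_neg (not_le.2 h), sub_sub, separatedBarrier, innerProfile]

theorem Ulow_eq_of_le {m μ R₀ t₀ C γ r : ℝ} (h : R₀ ≤ r) :
    Ulow m μ R₀ t₀ C γ r = separatedBarrier m t₀ C
      (fun s => γ * Real.log (s + t₀) ^ ((1 - μ) / (1 + μ))) (fun x => x ^ (1 - μ)) r := by
  funext s
  rw [Ulow, if_pos h, separatedBarrier]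

theorem Ulow_isPorousMediumSubsolutionAt_of_gt {m μ R₀ t₀ C Γ r t : ℝ} {b : ℝ → ℝ} (hm : 1 < m)
    (hμ : μ ∈ Ioo (-1) 1) (hC : 0 < C) (hΓ : 0 < Γ) (hR₀ : 0 < R₀) (hr : R₀ < r)
    (hτ : 1 < t + t₀) (hU : 0 < Ulow m μ R₀ t₀ C (Γ ^ ((1 - μ) / (1 + μ))) r t)
    (hΓR₀ : (1 - μ) / (1 + μ) * Γ ≤ R₀ ^ (1 + μ) / 2)
    (hΓC : (1 - μ) / (1 + μ) * Γ ≤ (1 - μ) / (m - 1) * (m * (1 - μ) * C ^ (m - 1)))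
    (hb : m * (1 - μ) * C ^ (m - 1) * (b r / r ^ μ - μ / r ^ (1 + μ)) ≤ 1 / 2) :
    IsPorousMediumSubsolutionAt m b (Ulow m μ R₀ t₀ C (Γ ^ ((1 - μ) / (1 + μ)))) r t := by
  have hm₁ : 0 < m - 1 := sub_pos.2 hm
  have hμ₁ : 0 < 1 - μ := sub_pos.2 hμ.2
  have hμ₂ : 0 < 1 + μ := by linarith [hμ.1]
  have hr₀ : 0 < r := hR₀.trans hr
  have hL : 0 < Real.log (t + t₀) := Real.log_pos hτ
  have hpos : r ^ (1 - μ) < (Γ * Real.log (t + t₀)) ^ ((1 - μ) / (1 + μ)) := by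
    rw [Ulow_eq_of_le hr.le] at hU
    exact lt_rpow_of_separatedBarrier_log_pos hm hΓ.le hτ.le hU
  refine .of_log_separatedBarrier hm hC hΓ hτ
    ((eventually_gt_nhds hr).mono fun x hx => Ulow_eq_of_le hx.le) hpos
    ((eventually_gt_nhds hr₀).mono fun x hx => hasDerivAt_rpow_one_sub μ hx.ne')
    ((Real.hasDerivAt_rpow_const (Or.inl hr₀.ne')).const_mul (1 - μ)) ?_
  have hSp := rpow_one_add_rpow_div hμ.1 hr₀.le
  have hS : 0 < r ^ (1 + μ) := by positivity
  have hSP : r ^ (1 + μ) < Γ * Real.log (t + t₀) := by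
    rwa [← hSp, Real.rpow_lt_rpow_iff hS.le (by positivity) (by positivity)] at hpos
  have key := outer_pressure_inequality (p := (1 - μ) / (1 + μ)) (by positivity) (by positivity)
    hS hSP.le (hΓR₀.trans (by gcongr)) hΓC hb
  rw [hSp, rpow_one_add_rpow_div_sub_one hμ.1 hr₀.le] at key
  refine key.trans_eq ?_
  rw [Real.rpow_sub_one hr₀.ne', Real.rpow_neg hr₀.le, Real.rpow_add hr₀, Real.rpow_one]
  field_simp
  ring

theorem Ulow_isPorousMediumSubsolutionAt_of_lt {m μ R₀ t₀ C Γ r t θ κ : ℝ} {b : ℝ → ℝ}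
    (hm : 1 < m) (hμ : μ ∈ Ioo (-1) 1) (hC : 0 < C) (hΓ : 0 < Γ) (hr₀ : 0 < r) (hr : r < R₀)
    (hτ : 1 < t + t₀) (hU : 0 < Ulow m μ R₀ t₀ C (Γ ^ ((1 - μ) / (1 + μ))) r t)
    (hθ : θ ≤ 1 / 4) (hb : m * (1 - μ) * C ^ (m - 1) * (b r * r + 1) / R₀ ^ (1 + μ) ≤ θ)
    (hκ : κ ≤ (1 - μ) / 4)
    (hκC : κ * R₀ ^ (1 + μ) = (1 - μ) / (m - 1) * (m * (1 - μ) * C ^ (m - 1)))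
    (hΓκ : (1 - μ) / (1 + μ) * Γ ≤ κ * R₀ ^ (1 + μ))
    (hP : R₀ ^ (1 + μ) * criticalRatio μ θ κ ^ ((1 - μ) / (1 + μ))⁻¹
      ≤ Γ * Real.log (t + t₀)) :
    IsPorousMediumSubsolutionAt m b (Ulow m μ R₀ t₀ C (Γ ^ ((1 - μ) / (1 + μ)))) r t := by
  have hm₁ : 0 < m - 1 := sub_pos.2 hm
  have hμ₁ : 0 < 1 - μ := sub_pos.2 hμ.2
  have hμ₂ : 0 < 1 + μ := by linarith [hμ.1]
  have hR₀ : 0 < R₀ := hr₀.trans hr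
  have hA : 0 < R₀ ^ (1 + μ) := by positivity
  have hpos : innerProfile μ R₀ r < (Γ * Real.log (t + t₀)) ^ ((1 - μ) / (1 + μ)) := by
    rw [Ulow_eq_of_lt hr] at hU
    exact lt_rpow_of_separatedBarrier_log_pos hm hΓ.le hτ.le hU
  refine .of_log_separatedBarrier hm hC hΓ hτ
    ((eventually_lt_nhds hr).mono fun x hx => Ulow_eq_of_lt hx) hpos
    (.of_forall (hasDerivAt_innerProfile μ R₀))
    ((hasDerivAt_id' r).const_mul ((1 - μ) / R₀ ^ (1 + μ))) ?_
  have hη := innerProfile_eq hμ.1 hR₀ r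
  have hs : (r / R₀) ^ 2 ≤ 1 := pow_le_one₀ (by positivity) ((div_le_one hR₀).2 hr.le)
  have key := inner_pressure_inequality hμ (by positivity) hA hθ hκ hΓκ hb hs hP
    (by rw [← hη]; exact (sub_pos.2 hpos).le)
  rw [← hη] at key
  refine key.trans_eq ?_
  have hR₀_sq : (R₀ ^ (1 + μ)) ^ ((1 - μ) / (1 + μ)) * R₀ ^ (1 + μ) = R₀ ^ 2 := by
    rw [rpow_one_add_rpow_div hμ.1 hR₀.le, rpow_one_sub_mul_rpow_one_add hR₀]
  have hprofile_deriv : ((1 - μ) / R₀ ^ (1 + μ) * r) ^ 2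
      = (1 - μ) ^ 2 * (R₀ ^ (1 + μ)) ^ ((1 - μ) / (1 + μ)) * (r / R₀) ^ 2 / R₀ ^ (1 + μ) := by
    rw [div_pow r, ← hR₀_sq]; field_simp
  rw [hprofile_deriv, eq_div_of_mul_eq hA.ne' hκC]
  field_simp
  ring

theorem div_eq_criticalRatio {m μ c A F : ℝ} (hm : 1 < m) (hA : 0 < A) :
    (4 * (m - 1) * A - 4 * m * (1 - μ) * ((m - 1) * (F + 1) + 1 - μ) * c)
        / ((3 + μ) * (m - 1) * A - 4 * m * (m - 1) * (1 - μ) * (F + 1) * c)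
      = criticalRatio μ (m * (1 - μ) * c * (F + 1) / A)
          ((1 - μ) / (m - 1) * (m * (1 - μ) * c) / A) := by
  have hm₁ : 0 < m - 1 := sub_pos.2 hm
  rw [criticalRatio, ← mul_div_mul_left (1 - _ - _) _ (by positivity : 4 * (m - 1) * A ≠ 0)]
  congr 1 <;> field_simp
  ring

theorem one_lt_and_mul_le_mul_log {A Γ ρ t t₀ : ℝ} (hA : 0 < A) (hΓ : 0 < Γ) (ht : 0 ≤ t)
    (ht₀ : 0 < t₀) (hρ : 0 < ρ) (h : ρ ≤ Γ / A * Real.log t₀) :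
    1 < t + t₀ ∧ A * ρ ≤ Γ * Real.log (t + t₀) := by
  have hlog : 0 < Real.log t₀ := pos_of_mul_pos_right (hρ.trans_le h) (by positivity)
  refine ⟨by linarith [(Real.log_pos_iff ht₀.le).1 hlog], ?_⟩
  calc A * ρ ≤ A * (Γ / A * Real.log t₀) := by gcongr
    _ = Γ * Real.log t₀ := by field_simp
    _ ≤ Γ * Real.log (t + t₀) := by gcongr; linarith

theorem gradientCoefficient_le {m μ K σ A : ℝ} (hm : 1 < m) (hμ : 0 ≤ 1 - μ) (hK : 0 < K)
    (hA : 0 < A) (hσ : σ * (2 * K) ≤ 1) (hAK : 2 ≤ A * ((m - 1) * K)) :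
    (1 - μ) / (m - 1) * σ / A ≤ (1 - μ) / 4 := by
  have hm₁ : 0 < m - 1 := sub_pos.2 hm
  have hσA : σ ≤ A / 4 * (m - 1) := le_of_mul_le_mul_right (by linarith) hK
  calc (1 - μ) / (m - 1) * σ / A ≤ (1 - μ) / (m - 1) * (A / 4 * (m - 1)) / A := by gcongr
    _ = (1 - μ) / 4 := by field_simp

theorem Ulow_isPorousMediumSubsolutionAt {m μ K R₀ F t₀ C Γ r t : ℝ} {b : ℝ → ℝ} (hm : 1 < m)
    (hμ : μ ∈ Ioo (-1) 1) (hK : 0 < K) (hC : 0 < C) (hΓ : 0 < Γ) (hR₀ : 0 < R₀) (ht₀ : 0 < t₀)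
    (hr : 0 < r) (hrR₀ : r ≠ R₀) (ht : 0 < t)
    (hKR₀ : 2 ≤ R₀ ^ (1 + μ) * ((m - 1) * K))
    (hCK : m * (1 - μ) * C ^ (m - 1) * (2 * K) ≤ 1)
    (hCF : m * (1 - μ) * C ^ (m - 1) * (4 * (F + 1)) ≤ R₀ ^ (1 + μ))
    (hΓC : Γ ≤ m * (1 + μ) * (1 - μ) * C ^ (m - 1) / (m - 1))
    (hlog : criticalRatio μ (m * (1 - μ) * C ^ (m - 1) * (F + 1) / R₀ ^ (1 + μ))
        ((1 - μ) / (m - 1) * (m * (1 - μ) * C ^ (m - 1)) / R₀ ^ (1 + μ))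
          ^ ((1 - μ) / (1 + μ))⁻¹ ≤ Γ / R₀ ^ (1 + μ) * Real.log t₀)
    (hb_inner : r < R₀ → b r * r ≤ F) (hb_outer : R₀ < r → b r / r ^ μ - μ / r ^ (1 + μ) ≤ K)
    (hU : 0 < Ulow m μ R₀ t₀ C (Γ ^ ((1 - μ) / (1 + μ))) r t) :
    IsPorousMediumSubsolutionAt m b (Ulow m μ R₀ t₀ C (Γ ^ ((1 - μ) / (1 + μ)))) r t := by
  have hm₁ : 0 < m - 1 := sub_pos.2 hm
  have hμ₁ : 0 < 1 - μ := sub_pos.2 hμ.2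
  have hμ₂ : 0 < 1 + μ := by linarith [hμ.1]
  have hA : 0 < R₀ ^ (1 + μ) := by positivity
  set c := C ^ (m - 1)
  set A := R₀ ^ (1 + μ)
  set θ := m * (1 - μ) * c * (F + 1) / A with hθ_def
  set κ := (1 - μ) / (m - 1) * (m * (1 - μ) * c) / A
  have hκA : κ * A = (1 - μ) / (m - 1) * (m * (1 - μ) * c) := div_mul_cancel₀ _ hA.ne'
  have hθ : θ ≤ 1 / 4 := by rw [hθ_def, div_le_iff₀ hA]; linarith
  have hκ : κ ≤ (1 - μ) / 4 := gradientCoefficient_le hm hμ₁.le hK hA hCK hKR₀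
  have hΓκ : (1 - μ) / (1 + μ) * Γ ≤ κ * A := by
    calc (1 - μ) / (1 + μ) * Γ ≤ (1 - μ) / (1 + μ) * (m * (1 + μ) * (1 - μ) * c / (m - 1)) := by
          gcongr
      _ = κ * A := by rw [hκA]; field_simp
  obtain ⟨hτ, hP⟩ := one_lt_and_mul_le_mul_log hA hΓ ht.le ht₀
    (Real.rpow_pos_of_pos (one_pos.trans_le (one_le_criticalRatio hμ.1 hθ hκ)) _) hlog
  rcases lt_or_gt_of_ne hrR₀ with hlt | hgt
  · have hb : m * (1 - μ) * c * (b r * r + 1) / A ≤ θ := by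
      rw [hθ_def]
      gcongr
      exact hb_inner hlt
    exact Ulow_isPorousMediumSubsolutionAt_of_lt hm hμ hC hΓ hr hlt hτ hU hθ hb hκ hκA hΓκ hP
  · have hΓA : κ * A ≤ A / 2 := by
      calc κ * A ≤ 1 / 2 * A := by gcongr; linarith [hμ.1]
        _ = A / 2 := by ring
    have hb : m * (1 - μ) * c * (b r / r ^ μ - μ / r ^ (1 + μ)) ≤ 1 / 2 := by
      calc _ ≤ m * (1 - μ) * c * K := by gcongr; exact hb_outer hgt
        _ ≤ 1 / 2 := by linarith
    exact Ulow_isPorousMediumSubsolutionAt_of_gt hm hμ hC hΓ hR₀ hgt hτ hU (hΓκ.trans hΓA)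
      (hΓκ.trans_eq hκA) hb

theorem stmt_4_general (m : ℝ) (hm : 1 < m) (μ : ℝ) (hμ : μ ∈ Ioo (-1 : ℝ) 1) (K : ℝ)
    (hK : 0 < K) :
    ∃ Rbar : ℝ, 0 < Rbar ∧
      ∀ R₀ : ℝ, Rbar ≤ R₀ →
      ∀ F : ℝ, -1 < F →
      ∀ b : ℝ → ℝ, (∀ r ∈ Ioo (0 : ℝ) R₀, b r * r ≤ F) →
        (∀ r : ℝ, R₀ ≤ r → b r / r ^ μ - μ / r ^ (1 + μ) ≤ K) →
      ∀ t₀ C γ : ℝ, 0 < t₀ → 0 < C →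
        C ^ (m - 1) ≤ 1 / (m * (1 - μ)) * min (1 / (2 * K)) (R₀ ^ (1 + μ) / (4 * (F + 1))) →
        0 < γ →
        γ ≤ (m * (1 + μ) * (1 - μ) * C ^ (m - 1) / (m - 1)) ^ ((1 - μ) / (1 + μ)) →
        ((4 * (m - 1) * R₀ ^ (1 + μ) - 4 * m * (1 - μ) * ((m - 1) * (F + 1) + 1 - μ) * C ^ (m - 1))
            / ((3 + μ) * (m - 1) * R₀ ^ (1 + μ)
              - 4 * m * (m - 1) * (1 - μ) * (F + 1) * C ^ (m - 1))) ^ ((1 + μ) / (1 - μ))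
          ≤ γ ^ ((1 + μ) / (1 - μ)) / R₀ ^ (1 + μ) * Real.log t₀ →
      ∀ r t : ℝ, 0 < r → r ≠ R₀ → 0 < t → 0 < Ulow m μ R₀ t₀ C γ r t →
        IsPorousMediumSubsolutionAt m b (Ulow m μ R₀ t₀ C γ) r t := by
  have : 0 < m - 1 := sub_pos.2 hm
  have hμ₁ : 0 < 1 - μ := sub_pos.2 hμ.2
  have hμ₂ : 0 < 1 + μ := by linarith [hμ.1]
  have hp : 0 < (1 - μ) / (1 + μ) := by positivity
  refine ⟨(2 / ((m - 1) * K)) ^ (1 + μ)⁻¹, by positivity, ?_⟩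
  intro R₀ hR₀_le F hF b hb_inner hb_outer t₀ C γ ht₀ hC hC_le hγ hγ_le hlog r t hr hrR₀ ht hU
  have hR₀ : 0 < R₀ := lt_of_lt_of_le (by positivity) hR₀_le
  have hA : 0 < R₀ ^ (1 + μ) := by positivity
  have hF₁ : 0 < F + 1 := by linarith
  rw [Real.rpow_inv_le_iff_of_pos (by positivity) hR₀.le hμ₂, div_le_iff₀ (by positivity)] at hR₀_le
  rw [one_div_mul_eq_div, le_div_iff₀' (by positivity), le_min_iff, le_div_iff₀ (by positivity),
    le_div_iff₀ (by positivity)] at hC_le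
  obtain ⟨hCK, hCF⟩ := hC_le
  obtain ⟨Γ, hΓ, rfl⟩ : ∃ Γ : ℝ, 0 < Γ ∧ Γ ^ ((1 - μ) / (1 + μ)) = γ :=
    ⟨γ ^ ((1 - μ) / (1 + μ))⁻¹, by positivity, Real.rpow_inv_rpow hγ.le hp.ne'⟩
  rw [Real.rpow_le_rpow_iff hΓ.le (by positivity) hp] at hγ_le
  rw [← inv_div (1 - μ), Real.rpow_rpow_inv hΓ.le hp.ne', div_eq_criticalRatio hm hA] at hlog
  exact Ulow_isPorousMediumSubsolutionAt hm hμ hK hC hΓ hR₀ ht₀ hr hrR₀ ht hR₀_le hCK hCF hγ_le hlog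
    (fun h => hb_inner r ⟨hr, h⟩) (fun h => hb_outer r h.le) hU

/-- Lemma 4.6 of the paper. Under the stated conditions on
`R₀, F, C, γ, t₀`, the barrier `U̲` is a pointwise subsolution of the radial porous
medium equation `u_t = (u^m)_{rr} + (n-1)(ψ'/ψ)(u^m)_r` at every point of positivity
off `r = R₀`. -/
theorem stmt_4
    (m : ℝ) (hm : 1 < m) (n : ℕ) (hn : 2 ≤ n)
    (μ : ℝ) (hμ : μ ∈ Set.Ioo (-1 : ℝ) 1)
    (R Q D : ℝ) (hR : 0 < R) (hQ : 0 < Q) (hD : 0 < D)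
    (w ψ ψ' : ℝ → ℝ)
    (hw : ∀ r : ℝ, 0 ≤ r →
      w r = if μ < 0 then
              (if r ≤ R then D
               else if r ≤ 2 * R then
                 Q * (2 * R) ^ (2 * μ) / R * (r - R) + D / R * (2 * R - r)
               else Q * r ^ (2 * μ))
            else max D (Q * r ^ (2 * μ)))
    (hψ0 : ψ 0 = 0) (hψ'0 : ψ' 0 = 1)
    (hd1 : ∀ r ∈ Set.Ici (0 : ℝ), HasDerivWithinAt ψ (ψ' r) (Set.Ici 0) r)
    (hd2 : ∀ r ∈ Set.Ici (0 : ℝ), HasDerivWithinAt ψ' (w r * ψ r) (Set.Ici 0) r) :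
    ∃ Rbar : ℝ, 0 < Rbar ∧
      ∀ R₀ : ℝ, Rbar ≤ R₀ →
      ∀ F : ℝ, 0 < F →
        (∀ r ∈ Set.Ioo (0 : ℝ) R₀, ((n : ℝ) - 1) * ψ' r * r / ψ r ≤ F) →
        (∀ r : ℝ, R₀ ≤ r →
          ((n : ℝ) - 1) * ψ' r / (ψ r * r ^ μ) - μ / r ^ (1 + μ)
            ≤ ((n : ℝ) - 1) * Real.sqrt (2 * Q)) →
      ∀ t₀ C γ : ℝ, 0 < t₀ → 0 < C →
        C ^ (m - 1) ≤ (1 / (m * (1 - μ))) *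
          min (1 / (2 * ((n : ℝ) - 1) * Real.sqrt (2 * Q)))
            (min (R₀ ^ (1 + μ) / (4 * (F + 1)))
              ((m - 1) * R₀ ^ (1 + μ) / (2 + (m - 1) * (F + 1)))) →
        0 < γ →
        γ ≤ (m * (1 + μ) * (1 - μ) * C ^ (m - 1) / (m - 1)) ^ ((1 - μ) / (1 + μ)) →
        (γ ^ ((1 + μ) / (1 - μ)) / R₀ ^ (1 + μ)) * Real.log t₀ ≥
          ((4 * (m - 1) * R₀ ^ (1 + μ)
              - 4 * m * (1 - μ) * ((m - 1) * (F + 1) + 1 - μ) * C ^ (m - 1)) /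
            ((3 + μ) * (m - 1) * R₀ ^ (1 + μ)
              - 4 * m * (m - 1) * (1 - μ) * (F + 1) * C ^ (m - 1)))
            ^ ((1 + μ) / (1 - μ)) →
      ∀ r t : ℝ, 0 < r → r ≠ R₀ → 0 < t → 0 < Ulow m μ R₀ t₀ C γ r t →
        deriv (fun s => Ulow m μ R₀ t₀ C γ r s) t
          ≤ deriv (deriv (fun x => (Ulow m μ R₀ t₀ C γ x t) ^ m)) r
            + ((n : ℝ) - 1) * (ψ' r / ψ r)
              * deriv (fun x => (Ulow m μ R₀ t₀ C γ x t) ^ m) r := by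
  have hn₁ : 0 < (n : ℝ) - 1 := sub_pos.2 (Nat.one_lt_cast.2 hn)
  obtain ⟨Rbar, hRbar, h⟩ :=
    stmt_4_general m hm μ hμ (((n : ℝ) - 1) * Real.sqrt (2 * Q)) (by positivity)
  refine ⟨Rbar, hRbar, fun R₀ hR₀ F hF h_inner h_outer t₀ C γ ht₀ hC hC_le =>
    h R₀ hR₀ F (by linarith) (fun r => ((n : ℝ) - 1) * (ψ' r / ψ r)) ?_ ?_ t₀ C γ ht₀ hC ?_⟩
  · exact fun r hr => (h_inner r hr).trans_eq' (by ring)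
  · simpa only [mul_div_assoc, div_div] using h_outer
  · rw [← mul_assoc 2]
    refine hC_le.trans (mul_le_mul_of_nonneg_left (min_le_min_left _ (min_le_left _ _)) ?_)
    have : 0 < 1 - μ := sub_pos.2 hμ.2
    positivity
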